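/- Continuous Chu–Vandermonde identity: for all real numbers s₁, s₂ ≥ 0 and x ≥ 0, setting m = (s₁+s₂)/2 and f_s(u) = {u+s choose s}, one has ∫_{0}^{x} f_{s₁}(u) f_{s₂}(x−u) du + f_{s₁}(x) + f_{s₂}(x) = ∫_{0}^{x} f_m(u) f_m(x−u) du + 2 f_m(x). -/

import Mathlib

/-- The continuous binomial coefficient `{x choose s}`. -/
noncomputable def cbinom (x s : ℝ) : ℝ :=
  ∑' n : ℕ, (s * (x - s)) ^ n *
    (2 / ((n.factorial : ℝ)) ^ 2 + x / ((n.factorial : ℝ) * ((n + 1).factorial : ℝ)))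

/-!
Write `𝓑F(u) = ∑ cₙ uⁿ / n!` for the Borel transform of `F = ∑ cₙ Xⁿ`. The Beta integral
`∫₀ˣ uⁱ/i! (x - u)ʲ/j! du = xⁱ⁺ʲ⁺¹/(i + j + 1)!` turns convolution into multiplication:
`∫₀ˣ 𝓑F(u) 𝓑G(x - u) du = 𝓑(XFG)(x)`. Moreover `f_s = 𝓑F_s` for the series `F_s` with
`1 + X F_s = (1 + X)² exp(sX)`. Hence the left-hand side of the identity is the Borel transform of
`X F_{s₁} F_{s₂} + F_{s₁} + F_{s₂} = ((1 + X F_{s₁}) (1 + X F_{s₂}) - 1) / X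
  = ((1 + X)⁴ exp((s₁ + s₂)X) - 1) / X`,
which depends on `s₁ + s₂` only.
-/

open MeasureTheory PowerSeries
open scoped Nat

section BetaIntegral

lemma hasDerivAt_pow_div_factorial (n : ℕ) (u : ℝ) :
    HasDerivAt (fun v : ℝ ↦ v ^ (n + 1) / (n + 1)!) (u ^ n / n !) u := by
  refine ((hasDerivAt_pow (n + 1) u).div_const _).congr_deriv ?_
  rw [Nat.factorial_succ]
  push_cast
  field_simp

lemma integral_pow_div_factorial_mul_sub_pow_div_factorial (x : ℝ) (i j : ℕ) :
    ∫ u in (0 : ℝ)..x, u ^ i / i ! * ((x - u) ^ j / j !) =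
      x ^ (i + j + 1) / (i + j + 1)! := by
  induction j generalizing i with
  | zero =>
    simp only [pow_zero, Nat.factorial_zero, Nat.cast_one, div_one, mul_one, add_zero]
    rw [intervalIntegral.integral_eq_sub_of_hasDerivAt
      (fun u _ ↦ hasDerivAt_pow_div_factorial i u)
      (Continuous.intervalIntegrable (by fun_prop) _ _)]
    simp
  | succ j ih =>
    have integration_by_parts := intervalIntegral.integral_mul_deriv_eq_deriv_mul
      (a := 0) (b := x)
      (fun u _ ↦ (hasDerivAt_pow_div_factorial j (x - u)).comp_const_sub x u)
      (fun u _ ↦ hasDerivAt_pow_div_factorial i u)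
      (Continuous.intervalIntegrable (by fun_prop) _ _)
      (Continuous.intervalIntegrable (by fun_prop) _ _)
    calc
      ∫ u in (0 : ℝ)..x, u ^ i / i ! * ((x - u) ^ (j + 1) / (j + 1)!)
      _ = ∫ u in (0 : ℝ)..x, u ^ (i + 1) / (i + 1)! * ((x - u) ^ j / j !) := by
        simpa [mul_comm] using integration_by_parts
      _ = x ^ (i + (j + 1) + 1) / (i + (j + 1) + 1)! := by
        rw [ih, add_right_comm i 1 j, add_assoc i j 1]

end BetaIntegral

/-- `HasBorelTransform F f` says that the entire function `f` is the Borel transform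
`u ↦ ∑ cₙ uⁿ / n!` of the formal power series `F = ∑ cₙ Xⁿ`; convergence at every real `u` is part
of the claim. -/
def HasBorelTransform (F : ℝ⟦X⟧) (f : ℝ → ℝ) : Prop :=
  ∀ u, HasSum (fun n ↦ coeff n F * (u ^ n / n !)) (f u)

namespace HasBorelTransform

variable {F G : ℝ⟦X⟧} {f g : ℝ → ℝ}

lemma unique (hf : HasBorelTransform F f) (hg : HasBorelTransform F g) : f = g :=
  funext fun u ↦ (hf u).unique (hg u)

lemma add (hf : HasBorelTransform F f) (hg : HasBorelTransform G g) :
    HasBorelTransform (F + G) (f + g) := fun u ↦ by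
  simpa only [map_add, add_mul, Pi.add_apply] using (hf u).add (hg u)

lemma X_mul_iff :
    HasBorelTransform (X * F) f ↔
      ∀ u, HasSum (fun n ↦ coeff n F * (u ^ (n + 1) / (n + 1)!)) (f u) :=
  forall_congr' fun u ↦ by
    rw [← hasSum_nat_add_iff' 1]
    simp [coeff_succ_X_mul]

lemma hasSum_mul (hf : HasBorelTransform F f) (hg : HasBorelTransform G g) (u v : ℝ) :
    HasSum (fun p : ℕ × ℕ ↦
      coeff p.1 F * (u ^ p.1 / p.1 !) * (coeff p.2 G * (v ^ p.2 / p.2 !))) (f u * g v) := by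
  have summable_mul :=
    summable_mul_of_summable_norm (hf u).summable.norm (hg v).summable.norm
  exact (hf u).mul (hg v) summable_mul

lemma hasSum_integral_mul_sub (hf : HasBorelTransform F f) (hg : HasBorelTransform G g) (x : ℝ) :
    HasSum (fun p : ℕ × ℕ ↦
      coeff p.1 F * coeff p.2 G * (x ^ (p.1 + p.2 + 1) / (p.1 + p.2 + 1)!))
      (∫ u in (0 : ℝ)..x, f u * g (x - u)) := by
  have termwise := intervalIntegral.hasSum_integral_of_dominated_convergence
    (μ := volume) (a := 0) (b := x)
    (F := fun (p : ℕ × ℕ) u ↦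
      coeff p.1 F * (u ^ p.1 / p.1 !) * (coeff p.2 G * ((x - u) ^ p.2 / p.2 !)))
    (fun p _ ↦ ‖coeff p.1 F * (x ^ p.1 / p.1 !) * (coeff p.2 G * (x ^ p.2 / p.2 !))‖)
    (fun p ↦ (by fun_prop : Continuous _).aestronglyMeasurable)
    (fun p ↦ .of_forall fun u hu ↦ ?_)
    (.of_forall fun _ _ ↦ (hf.hasSum_mul hg x x).summable.norm)
    intervalIntegrable_const
    (.of_forall fun u _ ↦ hf.hasSum_mul hg u (x - u))
  · refine termwise.congr_fun fun p ↦ ?_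
    rw [← integral_pow_div_factorial_mul_sub_pow_div_factorial,
      ← intervalIntegral.integral_const_mul]
    congr 1 with u
    ring
  · have hu' := Set.uIoc_subset_uIcc hu
    have abs_le : |u| ≤ |x| := by simpa using Set.abs_sub_left_of_mem_uIcc hu'
    have abs_sub_le : |x - u| ≤ |x| := by simpa using Set.abs_sub_right_of_mem_uIcc hu'
    simp only [norm_mul, norm_div, norm_pow, Real.norm_eq_abs]
    gcongr

theorem X_mul_mul (hf : HasBorelTransform F f) (hg : HasBorelTransform G g) :
    HasBorelTransform (X * (F * G)) (fun x ↦ ∫ u in (0 : ℝ)..x, f u * g (x - u)) := by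
  refine X_mul_iff.2 fun x ↦ ?_
  have sum_by_degree := (Finset.HasAntidiagonal.sigmaAntidiagonalEquivProd.hasSum_iff.2
    (hf.hasSum_integral_mul_sub hg x)).sigma fun n ↦ hasSum_fintype _
  refine sum_by_degree.congr_fun fun n ↦ ?_
  rw [coeff_mul, Finset.sum_mul, ← Finset.sum_coe_sort]
  refine Finset.sum_congr rfl fun p _ ↦ ?_
  simp [← Finset.HasAntidiagonal.mem_antidiagonal.1 p.2]

end HasBorelTransform

section BesselClifford

/-- The Bessel–Clifford function of order `k`, which is `z ^ (-k / 2) * I_k (2 √z)` for `z > 0`. It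
replaces the Bessel functions in the closed form of `cbinom`, and is entire in `z`. -/
noncomputable def besselClifford (k : ℕ) (z : ℝ) : ℝ :=
  ∑' n : ℕ, z ^ n / (n ! * (n + k)!)

lemma hasSum_besselClifford (k : ℕ) (z : ℝ) :
    HasSum (fun n : ℕ ↦ z ^ n / (n ! * (n + k)!)) (besselClifford k z) := by
  refine (Summable.of_norm_bounded (Real.summable_pow_div_factorial |z|) fun n ↦ ?_).hasSum
  have one_le : (1 : ℝ) ≤ (n + k)! := mod_cast (n + k).factorial_pos
  simp only [norm_div, norm_mul, norm_pow, Real.norm_eq_abs, Nat.abs_cast]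
  gcongr
  exact le_mul_of_one_le_right (by positivity) one_le

lemma cbinom_eq_besselClifford (x s : ℝ) :
    cbinom x s =
      2 * besselClifford 0 (s * (x - s)) + x * besselClifford 1 (s * (x - s)) := by
  refine HasSum.tsum_eq ?_
  refine (((hasSum_besselClifford 0 _).mul_left 2).add
    ((hasSum_besselClifford 1 _).mul_left x)).congr_fun fun n ↦ ?_
  rw [add_zero]
  ring

lemma coeff_rescale_exp (s : ℝ) (n : ℕ) : coeff n (rescale s (exp ℝ)) = s ^ n / n ! := by
  simp [coeff_rescale, coeff_exp, div_eq_mul_inv]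

lemma hasBorelTransform_rescale_exp (s : ℝ) :
    HasBorelTransform (rescale s (exp ℝ)) (fun u ↦ besselClifford 0 (s * u)) := fun u ↦ by
  refine (hasSum_besselClifford 0 (s * u)).congr_fun fun n ↦ ?_
  rw [coeff_rescale_exp, add_zero, mul_pow, div_mul_div_comm]

lemma hasBorelTransform_X_mul_rescale_exp (s : ℝ) :
    HasBorelTransform (X * rescale s (exp ℝ)) (fun u ↦ u * besselClifford 1 (s * u)) :=
  HasBorelTransform.X_mul_iff.2 fun u ↦ by
    refine ((hasSum_besselClifford 1 (s * u)).mul_left u).congr_fun fun n ↦ ?_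
    rw [coeff_rescale_exp]
    ring

lemma hasBorelTransform_shift_rescale_exp (s : ℝ) :
    HasBorelTransform (mk fun n ↦ coeff (n + 1) (rescale s (exp ℝ)))
      (fun u ↦ s * besselClifford 1 (s * u)) := fun u ↦ by
  refine ((hasSum_besselClifford 1 (s * u)).mul_left s).congr_fun fun n ↦ ?_
  rw [coeff_mk, coeff_rescale_exp]
  ring

end BesselClifford

section CbinomSeries

/-- The formal power series `F_s = ((1 + X)² exp(sX) - 1) / X`, whose Borel transform is
`u ↦ {u + s choose s}`. The first summand is `(exp(sX) - 1) / X`. -/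
noncomputable def cbinomSeries (s : ℝ) : ℝ⟦X⟧ :=
  (mk fun n ↦ coeff (n + 1) (rescale s (exp ℝ))) +
    (rescale s (exp ℝ) + rescale s (exp ℝ)) + X * rescale s (exp ℝ)

lemma one_add_X_mul_cbinomSeries (s : ℝ) :
    1 + X * cbinomSeries s = (1 + X) ^ 2 * rescale s (exp ℝ) := by
  have X_mul_shift : rescale s (exp ℝ) =
      X * (mk fun n ↦ coeff (n + 1) (rescale s (exp ℝ))) + 1 := by
    simpa [← coeff_zero_eq_constantCoeff_apply, coeff_rescale_exp] using
      eq_X_mul_shift_add_const (rescale s (exp ℝ))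
  rw [cbinomSeries]
  linear_combination -X_mul_shift

lemma X_mul_cbinomSeries_mul_add_add (s₁ s₂ : ℝ) :
    X * (X * (cbinomSeries s₁ * cbinomSeries s₂) + cbinomSeries s₁ + cbinomSeries s₂) =
      (1 + X) ^ 4 * rescale (s₁ + s₂) (exp ℝ) - 1 := by
  calc
    _ = (1 + X * cbinomSeries s₁) * (1 + X * cbinomSeries s₂) - 1 := by ring
    _ = (1 + X) ^ 4 * (rescale s₁ (exp ℝ) * rescale s₂ (exp ℝ)) - 1 := by
      simp only [one_add_X_mul_cbinomSeries]
      ring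
    _ = _ := by rw [exp_mul_exp_eq_exp_add]

lemma hasBorelTransform_cbinomSeries (s : ℝ) :
    HasBorelTransform (cbinomSeries s) (fun u ↦ cbinom (u + s) s) := by
  have cbinom_add_self (u : ℝ) : cbinom (u + s) s = s * besselClifford 1 (s * u) +
      (besselClifford 0 (s * u) + besselClifford 0 (s * u)) + u * besselClifford 1 (s * u) := by
    rw [cbinom_eq_besselClifford, add_sub_cancel_right]
    ring
  simp only [cbinom_add_self]
  exact ((hasBorelTransform_shift_rescale_exp s).add
    ((hasBorelTransform_rescale_exp s).add (hasBorelTransform_rescale_exp s))).add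
    (hasBorelTransform_X_mul_rescale_exp s)

end CbinomSeries

theorem continuous_chu_vandermonde_general {s₁ s₂ t₁ t₂ : ℝ} (h : s₁ + s₂ = t₁ + t₂) (x : ℝ) :
    (∫ u in (0 : ℝ)..x, cbinom (u + s₁) s₁ * cbinom ((x - u) + s₂) s₂) +
        cbinom (x + s₁) s₁ + cbinom (x + s₂) s₂ =
      (∫ u in (0 : ℝ)..x, cbinom (u + t₁) t₁ * cbinom ((x - u) + t₂) t₂) +
        cbinom (x + t₁) t₁ + cbinom (x + t₂) t₂ := by
  have transform (a b : ℝ) :=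
    (((hasBorelTransform_cbinomSeries a).X_mul_mul (hasBorelTransform_cbinomSeries b)).add
      (hasBorelTransform_cbinomSeries a)).add (hasBorelTransform_cbinomSeries b)
  have series_eq :
      X * (cbinomSeries s₁ * cbinomSeries s₂) + cbinomSeries s₁ + cbinomSeries s₂ =
        X * (cbinomSeries t₁ * cbinomSeries t₂) + cbinomSeries t₁ + cbinomSeries t₂ :=
    mul_left_cancel₀ X_ne_zero <| by simp only [X_mul_cbinomSeries_mul_add_add, h]
  exact congrFun ((series_eq ▸ transform s₁ s₂).unique (transform t₁ t₂)) x

theorem continuous_chu_vandermonde (s₁ s₂ x : ℝ) (hs₁ : 0 ≤ s₁) (hs₂ : 0 ≤ s₂)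
    (hx : 0 ≤ x) :
    (∫ u in (0 : ℝ)..x, cbinom (u + s₁) s₁ * cbinom ((x - u) + s₂) s₂) +
        cbinom (x + s₁) s₁ + cbinom (x + s₂) s₂ =
      (∫ u in (0 : ℝ)..x,
          cbinom (u + (s₁ + s₂) / 2) ((s₁ + s₂) / 2) *
            cbinom ((x - u) + (s₁ + s₂) / 2) ((s₁ + s₂) / 2)) +
        2 * cbinom (x + (s₁ + s₂) / 2) ((s₁ + s₂) / 2) := by
  rw [two_mul, ← add_assoc]
  exact continuous_chu_vandermonde_general (add_halves (s₁ + s₂)).symm x
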